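/- Fix integers 1 ≤ n ≤ m and a prime power q. A non-decreasing sequence of positive integers d_1 ≤ d_2 ≤ ... ≤ d_k is the sequence of generalized rank weights of some F_q-linear subcode of F_q^{m×n} if and only if k ≤ mn, d_k ≤ n, and every constant subsequence of (d_1, ..., d_k) has length at most m (i.e., each value occurs at most m times among d_1, ..., d_k). -/

import Mathlib

open Module

variable {F : Type*} [Field F] [Fintype F]

/-- The maximum rank of a subspace of the matrix space `F^{m×n}`. -/
noncomputable def maxrank {m n : ℕ} (𝒜 : Submodule F (Matrix (Fin m) (Fin n) F)) : ℕ :=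
  sSup {w | ∃ A ∈ 𝒜, A.rank = w}

/-- Optimal anticodes: subspaces `𝒜 ⊆ F^{m×n}` with `dim 𝒜 = m * maxrank 𝒜`. -/
def IsOptAnticode {m n : ℕ} (𝒜 : Submodule F (Matrix (Fin m) (Fin n) F)) : Prop :=
  Module.finrank F 𝒜 = m * maxrank 𝒜

/-- The weight of a subspace `𝒟 ⊆ F^{m×n}`: the minimum of `maxrank 𝒜` over optimal
anticodes `𝒜 ⊇ 𝒟`. -/
noncomputable def rkWt {m n : ℕ} (𝒟 : Submodule F (Matrix (Fin m) (Fin n) F)) : ℕ :=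
  sInf {w | ∃ 𝒜 : Submodule F (Matrix (Fin m) (Fin n) F),
    IsOptAnticode 𝒜 ∧ 𝒟 ≤ 𝒜 ∧ maxrank 𝒜 = w}

/-- The `r`-th generalized rank weight of a rank-metric code `𝒞 ⊆ F^{m×n}`. -/
noncomputable def grw {m n : ℕ} (𝒞 : Submodule F (Matrix (Fin m) (Fin n) F)) (r : ℕ) : ℕ :=
  sInf {w | ∃ 𝒟 : Submodule F (Matrix (Fin m) (Fin n) F),
    𝒟 ≤ 𝒞 ∧ r ≤ Module.finrank F 𝒟 ∧ rkWt 𝒟 = w}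

/-!
A subspace of matrices of rank at most `w` has dimension at most `m w`, and in the case of equality
it consists of the matrices which vanish on a fixed subspace, or (if `m = n`) of those with values
in a fixed subspace (Dieudonné, Flanders). The bound is proved by induction, fixing a vector `y` or
a functional `φ` and looking at the matrices of the form `φ ⬝ y` in the space. From the case of
equality, an optimal anticode of maximum rank `w + 1` contains one of maximum rank `w`, whose
dimension is smaller by `m`. Hence the generalized weights `d_r` and `d_{r+m}` differ, so that no
value is taken more than `m` times.

Conversely, let `N u` be the number of `r` with `d_r ≤ u`. Let `A_u` be the space of matrices
supported on the first `u` columns, and let `M_u` be nested Gabidulin codes, so that nonzero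
elements of `M_u` have rank more than `u` and `dim M_u = m (n - u)`. As `A_{u+1} ⊓ M_u` has
dimension at least `m`, the code can be built as a direct sum of subspaces of these intersections of
dimension `N (u + 1) - N u`. The summands from `u` on lie in `M_u`, hence meet no anticode of
maximum rank `u`, whereas the others add up to a subspace of `A_u` of dimension `N u`.
-/

section LinearAlgebra

variable {K U Y : Type*} [Field K] [AddCommGroup U] [Module K U] [AddCommGroup Y] [Module K Y]

theorem exists_between_finrank_eq [FiniteDimensional K Y] {W₁ W₂ : Submodule K Y} (h : W₁ ≤ W₂)
    {w : ℕ} (h₁ : finrank K W₁ ≤ w) (h₂ : w ≤ finrank K W₂) :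
    ∃ R, W₁ ≤ R ∧ R ≤ W₂ ∧ finrank K R = w := by
  induction w, h₁ using Nat.le_induction with
  | base => exact ⟨W₁, le_rfl, h, rfl⟩
  | succ w _ ih =>
    obtain ⟨R, hW₁R, hRW₂, rfl⟩ := ih (by omega)
    obtain ⟨y, hy, hyR⟩ : ∃ y ∈ W₂, y ∉ R := by
      by_contra! hle
      exact (Submodule.finrank_mono hle).not_gt h₂
    exact ⟨R ⊔ K ∙ y, hW₁R.trans le_sup_left,
      sup_le hRW₂ ((Submodule.span_singleton_le_iff_mem y W₂).2 hy),
      Submodule.finrank_sup_span_singleton hyR⟩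

theorem exists_surjective_of_finrank_le [FiniteDimensional K U] [FiniteDimensional K Y]
    (h : finrank K Y ≤ finrank K U) : ∃ f : U →ₗ[K] Y, Function.Surjective f := by
  obtain ⟨g, hg⟩ := finrank_le_iff_exists_linearMap.1 h
  obtain ⟨f, hf⟩ := g.exists_leftInverse_of_injective (LinearMap.ker_eq_bot.2 hg)
  exact ⟨f, fun y ↦ ⟨g y, LinearMap.congr_fun hf y⟩⟩

theorem finrank_map_add_finrank_comap {X : Type*} [AddCommGroup X] [Module K X]
    [FiniteDimensional K U] {j : X →ₗ[K] U} {T : U →ₗ[K] Y} (hj : Function.Injective j)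
    (hjT : Function.Exact j T) (V : Submodule K U) :
    finrank K (V.map T) + finrank K (V.comap j) = finrank K V := by
  have hcomap : finrank K (V.comap j) = finrank K (T.domRestrict V).ker := by
    rw [(Submodule.equivMapOfInjective j hj _).finrank_eq, Submodule.map_comap_eq,
      LinearMap.ker_domRestrict, ← Submodule.finrank_map_subtype_eq, Submodule.map_comap_subtype,
      LinearMap.exact_iff.1 hjT, inf_comm]
  rw [hcomap, ← LinearMap.range_domRestrict]
  exact (T.domRestrict V).finrank_range_add_finrank_ker

/-- The linear maps into `Y` whose range lies in `R`. -/
def homsInto (R : Submodule K Y) : Submodule K (U →ₗ[K] Y) :=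
  LinearMap.range (LinearMap.compRight K R.subtype)

/-- The linear maps on `U` which vanish on `S`. -/
def homsVanishingOn (S : Submodule K U) : Submodule K (U →ₗ[K] Y) :=
  LinearMap.ker (LinearMap.domRestrict' S)

theorem mem_homsInto {R : Submodule K Y} {f : U →ₗ[K] Y} : f ∈ homsInto R ↔ f.range ≤ R := by
  refine ⟨?_, fun h ↦ ⟨f.codRestrict R fun x ↦ h ⟨x, rfl⟩, rfl⟩⟩
  rintro ⟨g, rfl⟩ - ⟨x, rfl⟩
  exact (g x).2

theorem mem_homsVanishingOn {S : Submodule K U} {f : U →ₗ[K] Y} :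
    f ∈ homsVanishingOn S ↔ S ≤ f.ker :=
  ⟨fun h x hx ↦ LinearMap.congr_fun h ⟨x, hx⟩, fun h ↦ LinearMap.ext fun x ↦ h x.2⟩

theorem smulRight_mem_homsInto {R : Submodule K Y} (φ : Dual K U) {y : Y} (hy : y ∈ R) :
    φ.smulRight y ∈ homsInto R :=
  mem_homsInto.2 fun _ ⟨x, hx⟩ ↦ hx ▸ R.smul_mem (φ x) hy

theorem smulRight_mem_homsVanishingOn {S : Submodule K U} {φ : Dual K U} (hφ : S ≤ φ.ker) (y : Y) :
    φ.smulRight y ∈ homsVanishingOn S :=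
  mem_homsVanishingOn.2 fun x hx ↦ by simp [LinearMap.mem_ker.1 (hφ hx)]

theorem finrank_homsInto [FiniteDimensional K U] (R : Submodule K Y) :
    finrank K (homsInto R : Submodule K (U →ₗ[K] Y)) = finrank K U * finrank K R := by
  rw [homsInto, LinearMap.finrank_range_of_inj, finrank_linearMap]
  exact fun f g h ↦ LinearMap.ext fun x ↦ Subtype.ext (LinearMap.congr_fun h x)

theorem domRestrict'_surjective (S : Submodule K U) :
    Function.Surjective (LinearMap.domRestrict' S : (U →ₗ[K] Y) →ₗ[K] S →ₗ[K] Y) :=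
  fun f ↦ f.exists_extend

theorem finrank_homsVanishingOn_add [FiniteDimensional K U] [FiniteDimensional K Y]
    (S : Submodule K U) :
    finrank K (homsVanishingOn S : Submodule K (U →ₗ[K] Y)) + finrank K S * finrank K Y =
      finrank K U * finrank K Y := by
  have h := (LinearMap.domRestrict' S : (U →ₗ[K] Y) →ₗ[K] _).finrank_range_add_finrank_ker
  rw [LinearMap.range_eq_top.2 (domRestrict'_surjective S), finrank_top, finrank_linearMap,
    finrank_linearMap] at h
  rw [homsVanishingOn, add_comm, h]

theorem sum_coord_smulRight {ι : Type*} [Fintype ι] (b : Basis ι K U) (f : U →ₗ[K] Y) :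
    ∑ i, (b.coord i).smulRight (f (b i)) = f := by
  classical
  exact b.ext fun j ↦ by simp [Finsupp.single_apply]

end LinearAlgebra

section SpanSurjective

variable {K A B : Type*} [Field K] [AddCommGroup A] [Module K A] [AddCommGroup B] [Module K B]

theorem exists_surjective_comp_eq [FiniteDimensional K A] [FiniteDimensional K B]
    (h : finrank K B ≤ finrank K A) {ℓ : Dual K A} {ψ : Dual K B} (hℓ : ℓ ≠ 0) (hψ : ψ ≠ 0) :
    ∃ f : A →ₗ[K] B, Function.Surjective f ∧ ψ ∘ₗ f = ℓ := by
  have hker : finrank K ψ.ker ≤ finrank K ℓ.ker := by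
    have := Dual.finrank_ker_add_one_of_ne_zero hℓ
    have := Dual.finrank_ker_add_one_of_ne_zero hψ
    omega
  obtain ⟨p, hp⟩ := exists_surjective_of_finrank_le hker
  obtain ⟨a, ha⟩ := LinearMap.surjective hℓ 1
  obtain ⟨c, hc⟩ := LinearMap.surjective hψ 1
  obtain ⟨g, hg⟩ := (ψ.ker.subtype ∘ₗ p).exists_extend
  have hgp (x : ℓ.ker) : g x = p x := LinearMap.congr_fun hg x
  let f : A →ₗ[K] B := g + ℓ.smulRight (c - g a)
  have hfa : f a = c := by simp [f, ha]
  have hf_ker (x : ℓ.ker) : f x = p x := by simp [f, hgp]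
  have hcomp (x : A) : ψ (f x) = ℓ x := by
    have hx : x - ℓ x • a ∈ ℓ.ker := by simp [ha]
    have := (congrArg ψ (hf_ker ⟨_, hx⟩)).trans (p ⟨_, hx⟩).2
    simpa [hfa, hc, sub_eq_zero] using this
  refine ⟨f, fun b ↦ ?_, LinearMap.ext hcomp⟩
  have hb : b - ψ b • c ∈ ψ.ker := by simp [hc]
  obtain ⟨x, hx⟩ := hp ⟨_, hb⟩
  exact ⟨x + ψ b • a, by simp [hf_ker, hx, hfa]⟩

theorem surjective_sub_smulRight {f : A →ₗ[K] B} (hf : Function.Surjective f) {ψ : Dual K B} {b : B}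
    (hb : ψ b = 0) : Function.Surjective (f - (ψ ∘ₗ f).smulRight b) := by
  intro y
  obtain ⟨x, rfl⟩ := hf y
  obtain ⟨c, rfl⟩ := hf b
  exact ⟨x + ψ (f x) • c, by simp [hb]⟩

theorem smulRight_mem_span_surjective [FiniteDimensional K A] [FiniteDimensional K B]
    (h : finrank K B ≤ finrank K A) (ℓ : Dual K A) (b : B) :
    ℓ.smulRight b ∈ Submodule.span K {f : A →ₗ[K] B | Function.Surjective f} := by
  obtain rfl | hℓ := eq_or_ne ℓ 0
  · convert Submodule.zero_mem _
    ext; simp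
  obtain htop | hlt := eq_or_lt_of_le (le_top : K ∙ b ≤ ⊤)
  · refine Submodule.subset_span (LinearMap.range_eq_top.1 ?_)
    rw [LinearMap.range_smulRight_apply hℓ, htop]
  obtain ⟨ψ, hψ, hbψ⟩ := Submodule.exists_le_ker_of_lt_top _ hlt
  obtain ⟨f, hf, rfl⟩ := exists_surjective_comp_eq h hℓ hψ
  have hb : ψ b = 0 := hbψ (Submodule.mem_span_singleton_self b)
  rw [← sub_sub_cancel f ((ψ ∘ₗ f).smulRight b)]
  exact sub_mem (Submodule.subset_span hf) (Submodule.subset_span (surjective_sub_smulRight hf hb))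

theorem span_surjective_eq_top [FiniteDimensional K A] [FiniteDimensional K B]
    (h : finrank K B ≤ finrank K A) :
    Submodule.span K {f : A →ₗ[K] B | Function.Surjective f} = ⊤ := by
  refine eq_top_iff.2 fun f _ ↦ ?_
  rw [← sum_coord_smulRight (finBasis K A) f]
  exact sum_mem fun i _ ↦ smulRight_mem_span_surjective h _ _

theorem homsVanishingOn_inf_homsInto_le_span [FiniteDimensional K A] [FiniteDimensional K B]
    {S : Submodule K A} {R : Submodule K B} (h : finrank K R ≤ finrank K (A ⧸ S)) :
    homsVanishingOn S ⊓ homsInto R ≤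
      Submodule.span K {f : A →ₗ[K] B | S ≤ f.ker ∧ f.range = R} := by
  rintro f ⟨hfS, hfR⟩
  let f' : A ⧸ S →ₗ[K] R := S.liftQ (f.codRestrict R fun x ↦ mem_homsInto.1 hfR ⟨x, rfl⟩)
    (by rw [LinearMap.ker_codRestrict]; exact mem_homsVanishingOn.1 hfS)
  let Φ : (A ⧸ S →ₗ[K] R) →ₗ[K] A →ₗ[K] B :=
    LinearMap.lcomp K B S.mkQ ∘ₗ LinearMap.compRight K R.subtype
  have hmem : Φ f' ∈ (Submodule.span K {g : A ⧸ S →ₗ[K] R | Function.Surjective g}).map Φ :=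
    Submodule.mem_map_of_mem (span_surjective_eq_top h ▸ Submodule.mem_top)
  have hΦ : Φ f' = f := LinearMap.ext fun x ↦ rfl
  rw [hΦ, Submodule.map_span] at hmem
  refine Submodule.span_mono ?_ hmem
  rintro - ⟨g, hg, rfl⟩
  refine ⟨fun x hx ↦ ?_, ?_⟩
  · simp [Φ, (Submodule.Quotient.mk_eq_zero S).2 hx]
  · change LinearMap.range ((R.subtype ∘ₗ g) ∘ₗ S.mkQ) = R
    rw [LinearMap.range_comp_of_range_eq_top _ S.range_mkQ, LinearMap.range_comp,
      LinearMap.range_eq_top.2 hg, Submodule.map_top, Submodule.range_subtype]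

end SpanSurjective

section RankOne

variable {K U Y : Type*} [Field K] [AddCommGroup U] [Module K U] [AddCommGroup Y] [Module K Y]

/-- The vectors `y` for which the rank-one map `φ ⊗ y` lies in `V`. -/
def rankOneVectors (V : Submodule K (U →ₗ[K] Y)) (φ : Dual K U) : Submodule K Y :=
  V.comap (LinearMap.smulRightₗ φ)

/-- The linear forms `φ` for which the rank-one map `φ ⊗ y` lies in `V`. -/
def rankOneForms (V : Submodule K (U →ₗ[K] Y)) (y : Y) : Submodule K (Dual K U) :=
  V.comap (LinearMap.smulRightₗ.flip y)

theorem mem_rankOneVectors {V : Submodule K (U →ₗ[K] Y)} {φ : Dual K U} {y : Y} :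
    y ∈ rankOneVectors V φ ↔ φ.smulRight y ∈ V :=
  Iff.rfl

theorem mem_rankOneForms {V : Submodule K (U →ₗ[K] Y)} {φ : Dual K U} {y : Y} :
    φ ∈ rankOneForms V y ↔ φ.smulRight y ∈ V :=
  Iff.rfl

theorem exact_smulRightₗ_domRestrict' {φ : Dual K U} (hφ : φ ≠ 0) :
    Function.Exact (LinearMap.smulRightₗ φ : Y →ₗ[K] U →ₗ[K] Y)
      (LinearMap.domRestrict' φ.ker) := by
  obtain ⟨e, he⟩ := LinearMap.surjective hφ 1
  refine fun f ↦ ⟨fun hf ↦ ⟨f e, LinearMap.ext fun x ↦ ?_⟩, ?_⟩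
  · have hx : f (x - φ x • e) = 0 := LinearMap.congr_fun hf ⟨x - φ x • e, by simp [he]⟩
    rw [map_sub, map_smul, sub_eq_zero] at hx
    exact hx.symm
  · rintro ⟨y, rfl⟩
    ext x
    simp

theorem exact_smulRightₗ_flip_mkQ {y : Y} (hy : y ≠ 0) :
    Function.Exact (LinearMap.smulRightₗ.flip y : Dual K U →ₗ[K] U →ₗ[K] Y)
      (LinearMap.compRight K (K ∙ y).mkQ) := by
  refine fun f ↦ ⟨fun hf ↦ ?_, ?_⟩
  · have hfy (x : U) : f x ∈ K ∙ y :=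
      (Submodule.Quotient.mk_eq_zero _).1 (LinearMap.congr_fun hf x)
    let c := LinearEquiv.coord K Y y hy
    refine ⟨c ∘ₗ f.codRestrict (K ∙ y) hfy, LinearMap.ext fun x ↦ ?_⟩
    exact LinearEquiv.coord_apply_smul K Y y hy ⟨f x, hfy x⟩
  · rintro ⟨φ, rfl⟩
    ext x
    simp

theorem smulRightₗ_injective {φ : Dual K U} (hφ : φ ≠ 0) :
    Function.Injective (LinearMap.smulRightₗ φ : Y →ₗ[K] U →ₗ[K] Y) := by
  obtain ⟨e, he⟩ := LinearMap.surjective hφ 1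
  intro y z h
  simpa [he] using LinearMap.congr_fun h e

theorem smulRightₗ_flip_injective {y : Y} (hy : y ≠ 0) :
    Function.Injective (LinearMap.smulRightₗ.flip y : Dual K U →ₗ[K] U →ₗ[K] Y) :=
  fun _ _ h ↦ LinearMap.ext fun x ↦ smul_left_injective K hy (LinearMap.congr_fun h x)

variable [FiniteDimensional K Y]

theorem finrank_map_mkQ_lt {R : Submodule K Y} {y : Y} (hy : y ≠ 0) (hyR : y ∈ R) :
    finrank K (R.map (K ∙ y).mkQ) < finrank K R := by
  have h := finrank_map_add_finrank_comap (K ∙ y).subtype_injective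
    (LinearMap.exact_subtype_mkQ (K ∙ y)) R
  have : 1 ≤ finrank K (R.comap (K ∙ y).subtype) := by
    refine Submodule.one_le_finrank_iff.2 ((Submodule.ne_bot_iff _).2 ?_)
    exact ⟨⟨y, Submodule.mem_span_singleton_self y⟩, hyR, by simpa using hy⟩
  omega

theorem finrank_map_ker_lt_of_notMem {V : Submodule K (U →ₗ[K] Y)} {w : ℕ}
    (hV : ∀ f ∈ V, finrank K f.range ≤ w) {φ : Dual K U} {y : Y}
    (hφ : φ ≠ 0) (hy : y ∈ rankOneVectors V φ) {f : U →ₗ[K] Y} (hf : f ∈ V)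
    (hyf : y ∉ φ.ker.map f) : finrank K (φ.ker.map f) < w := by
  obtain ⟨e, he⟩ := LinearMap.surjective hφ 1
  obtain ⟨g, hgV, hgf, hge⟩ : ∃ g ∈ V, φ.ker.map g = φ.ker.map f ∧ g e ∉ φ.ker.map f := by
    by_cases hfe : f e ∈ φ.ker.map f
    · refine ⟨f + φ.smulRight y, add_mem hf hy, ?_, ?_⟩
      · exact SetLike.coe_injective (Set.image_congr fun x hx ↦ by simp_all)
      · simpa [he, Submodule.add_mem_iff_right _ hfe] using hyf
    · exact ⟨f, hf, rfl, hfe⟩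
  refine lt_of_lt_of_le (Submodule.finrank_lt_finrank_of_lt ?_) (hV g hgV)
  rw [← hgf] at hge ⊢
  exact lt_of_le_of_ne LinearMap.map_le_range fun h ↦ hge (h ▸ LinearMap.mem_range_self g e)

theorem finrank_range_mkQ_comp_lt {V : Submodule K (U →ₗ[K] Y)} {w : ℕ}
    (hV : ∀ f ∈ V, finrank K f.range ≤ w) {φ : Dual K U} {y : Y}
    (hy : y ≠ 0) (hφ : φ ∈ rankOneForms V y) {f : U →ₗ[K] Y} (hf : f ∈ V)
    {x : U} (hx : f x ∈ K ∙ y) (hφx : φ x ≠ 0) :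
    finrank K ((K ∙ y).mkQ ∘ₗ f).range < w := by
  obtain ⟨g, hgV, hgf, hgy⟩ :
      ∃ g ∈ V, (K ∙ y).mkQ ∘ₗ g = (K ∙ y).mkQ ∘ₗ f ∧ y ∈ g.range := by
    by_cases hfx : f x = 0
    · refine ⟨f + φ.smulRight y, add_mem hf hφ, ?_, (φ x)⁻¹ • x, by simp [hfx, hφx]⟩
      ext z
      simp
    · obtain ⟨c, hc⟩ := Submodule.mem_span_singleton.1 hx
      refine ⟨f, hf, rfl, c⁻¹ • x, ?_⟩
      have hc0 : c ≠ 0 := fun h ↦ hfx (by simp [← hc, h])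
      rw [map_smul, ← hc, inv_smul_smul₀ hc0]
  rw [← hgf, LinearMap.range_comp]
  exact (finrank_map_mkQ_lt hy hgy).trans_le (hV g hgV)

theorem finrank_range_lt_of_mem_map_domRestrict' {V : Submodule K (U →ₗ[K] Y)} {w : ℕ}
    (hV : ∀ f ∈ V, finrank K f.range ≤ w) {φ : Dual K U} (hφ : φ ≠ 0)
    (hw : w < finrank K (rankOneVectors V φ)) {g : φ.ker →ₗ[K] Y}
    (hg : g ∈ V.map (LinearMap.domRestrict' φ.ker)) : finrank K g.range < w := by
  obtain ⟨f, hf, rfl⟩ := hg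
  change finrank K (f.domRestrict φ.ker).range < w
  rw [LinearMap.range_domRestrict]
  by_contra hle
  have hsub : rankOneVectors V φ ≤ φ.ker.map f := fun y hy ↦ by
    by_contra hyf
    exact hle (finrank_map_ker_lt_of_notMem hV hφ hy hf hyf)
  have h₁ := Submodule.finrank_mono (hsub.trans LinearMap.map_le_range)
  exact (hw.trans_le h₁).not_ge (hV f hf)

variable [FiniteDimensional K U]

theorem finrank_map_domRestrict'_add_finrank_rankOneVectors (V : Submodule K (U →ₗ[K] Y))
    {φ : Dual K U} (hφ : φ ≠ 0) :
    finrank K (V.map (LinearMap.domRestrict' φ.ker)) + finrank K (rankOneVectors V φ) =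
      finrank K V := by
  have hexact := exact_smulRightₗ_domRestrict' (Y := Y) hφ
  have hinj := smulRightₗ_injective (Y := Y) hφ
  exact finrank_map_add_finrank_comap hinj hexact V

theorem finrank_map_mkQ_add_finrank_rankOneForms (V : Submodule K (U →ₗ[K] Y)) {y : Y}
    (hy : y ≠ 0) :
    finrank K (V.map (LinearMap.compRight K (K ∙ y).mkQ)) + finrank K (rankOneForms V y) =
      finrank K V := by
  have hexact := exact_smulRightₗ_flip_mkQ (K := K) (U := U) hy
  have hinj := smulRightₗ_flip_injective (K := K) (U := U) hy
  exact finrank_map_add_finrank_comap hinj hexact V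

theorem finrank_range_lt_of_mem_map_mkQ {V : Submodule K (U →ₗ[K] Y)} {w : ℕ}
    (hV : ∀ f ∈ V, finrank K f.range ≤ w) {y : Y} (hy : y ≠ 0)
    (hw : w < finrank K (rankOneForms V y)) {g : U →ₗ[K] Y ⧸ K ∙ y}
    (hg : g ∈ V.map (LinearMap.compRight K (K ∙ y).mkQ)) : finrank K g.range < w := by
  obtain ⟨f, hf, rfl⟩ := hg
  rw [LinearMap.compRight_apply]
  set g := (K ∙ y).mkQ ∘ₗ f with hg
  by_contra hle
  have hsub : rankOneForms V y ≤ g.ker.dualAnnihilator := fun φ hφ ↦ by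
    refine (Submodule.mem_dualAnnihilator φ).2 fun x hx ↦ ?_
    by_contra hφx
    exact hle (finrank_range_mkQ_comp_lt hV hy hφ hf ((Submodule.Quotient.mk_eq_zero _).1 hx) hφx)
  have h₁ := Submodule.finrank_mono hsub
  rw [← g.range_dualMap_eq_dualAnnihilator_ker, g.finrank_range_dualMap_eq_finrank_range] at h₁
  have h₂ : finrank K g.range ≤ finrank K f.range := by
    rw [hg, LinearMap.range_comp]
    exact Submodule.finrank_map_le _ _
  exact ((hw.trans_le h₁).trans_le h₂).not_ge (hV f hf)

theorem homsVanishingOn_inf_homsInto_le_map_domRestrict' {V : Submodule K (U →ₗ[K] Y)} {w : ℕ}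
    (hV : ∀ f ∈ V, finrank K f.range ≤ w) {H : Submodule K U} {S : Submodule K H}
    {R : Submodule K Y} (hR : finrank K R = w) (hS : w ≤ finrank K (H ⧸ S))
    (h : homsVanishingOn S ⊓ homsInto R ≤ V.map (LinearMap.domRestrict' H)) :
    homsVanishingOn S ⊓ homsInto R ≤ (V ⊓ homsInto R).map (LinearMap.domRestrict' H) := by
  refine (homsVanishingOn_inf_homsInto_le_span (hR.trans_le hS)).trans (Submodule.span_le.2 ?_)
  rintro g ⟨hgS, rfl⟩
  obtain ⟨f, hf, rfl⟩ := h ⟨mem_homsVanishingOn.2 hgS, mem_homsInto.2 le_rfl⟩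
  change finrank K (f.domRestrict H).range = w at hR
  have hle : (f.domRestrict H).range ≤ f.range := by
    rw [LinearMap.range_domRestrict]
    exact LinearMap.map_le_range
  have heq := Submodule.eq_of_le_of_finrank_le hle (hR ▸ hV f hf)
  exact ⟨f, ⟨hf, mem_homsInto.2 heq.ge⟩, rfl⟩

end RankOne

section Classification

variable {K U Y : Type*} [Field K] [AddCommGroup U] [Module K U] [AddCommGroup Y] [Module K Y]

/-- The conclusion of the Dieudonné–Flanders theorem for a space `V` of linear maps of rank at
most `w`: a bound for `dim V`, with equality only for the spaces of all linear maps vanishing on,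
or with range in, a fixed subspace. -/
def FlandersConclusion (V : Submodule K (U →ₗ[K] Y)) (w : ℕ) : Prop :=
  finrank K V ≤ w * finrank K Y ∧ (finrank K V = w * finrank K Y →
    (∃ S : Submodule K U, finrank K S + w = finrank K U ∧ V = homsVanishingOn S) ∨
    (finrank K U = finrank K Y ∧ ∃ R : Submodule K Y, finrank K R = w ∧ V = homsInto R))

variable (K U Y) in
/-- The Dieudonné–Flanders theorem for spaces of linear maps `U → Y`, as an inductive statement. -/
def FlandersProperty : Prop :=
  ∀ (V : Submodule K (U →ₗ[K] Y)) (w : ℕ), w ≤ finrank K U →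
    (∀ f ∈ V, finrank K f.range ≤ w) → FlandersConclusion V w

theorem exists_notMem_of_finrank_lt {R : Submodule K Y} (h : finrank K R < finrank K Y) :
    ∃ y, y ∉ R := by
  by_contra! hall
  rw [Submodule.eq_top_iff'.2 hall, finrank_top] at h
  exact lt_irrefl _ h

theorem le_of_map_mkQ_eq_homsVanishingOn {V : Submodule K (U →ₗ[K] Y)} {y₁ y₂ z : Y}
    (hz : z ∉ K ∙ y₁ ⊔ K ∙ y₂) {S₁ S₂ : Submodule K U}
    (h₁ : V.map (LinearMap.compRight K (K ∙ y₁).mkQ) = homsVanishingOn S₁)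
    (h₂ : V.map (LinearMap.compRight K (K ∙ y₂).mkQ) ≤ homsVanishingOn S₂) : S₂ ≤ S₁ := by
  intro x hx₂
  by_contra hx₁
  obtain ⟨ℓ, hℓx, hℓ⟩ := Submodule.exists_le_ker_of_notMem hx₁
  obtain ⟨f, hf, hfℓ⟩ : ℓ.smulRight ((K ∙ y₁).mkQ z) ∈ V.map _ :=
    h₁ ▸ smulRight_mem_homsVanishingOn hℓ _
  have hfx₁ : ℓ x • z - f x ∈ K ∙ y₁ :=
    (Submodule.Quotient.eq _).1 (LinearMap.congr_fun hfℓ x).symm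
  have hfx₂ : f x ∈ K ∙ y₂ := (Submodule.Quotient.mk_eq_zero _).1
    (mem_homsVanishingOn.1 (h₂ (Submodule.mem_map_of_mem hf)) hx₂)
  have hsmul : ℓ x • z ∈ K ∙ y₁ ⊔ K ∙ y₂ :=
    sub_add_cancel (ℓ x • z) (f x) ▸ Submodule.add_mem_sup hfx₁ hfx₂
  exact hz ((Submodule.smul_mem_iff _ hℓx).1 hsmul)

theorem le_homsVanishingOn_of_map_mkQ_le {V : Submodule K (U →ₗ[K] Y)} {P₁ P₂ : Submodule K Y}
    (hP : Disjoint P₁ P₂) {S : Submodule K U}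
    (h₁ : V.map (LinearMap.compRight K P₁.mkQ) ≤ homsVanishingOn S)
    (h₂ : V.map (LinearMap.compRight K P₂.mkQ) ≤ homsVanishingOn S) : V ≤ homsVanishingOn S := by
  have hmem {P : Submodule K Y} (h : V.map (LinearMap.compRight K P.mkQ) ≤ homsVanishingOn S)
      {f : U →ₗ[K] Y} (hf : f ∈ V) {x : U} (hx : x ∈ S) : f x ∈ P :=
    (Submodule.Quotient.mk_eq_zero _).1
      (mem_homsVanishingOn.1 (h (Submodule.mem_map_of_mem hf)) hx)
  exact fun f hf ↦ mem_homsVanishingOn.2 fun x hx ↦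
    Submodule.disjoint_def.1 hP _ (hmem h₁ hf hx) (hmem h₂ hf hx)

variable [FiniteDimensional K Y]

theorem finrank_range_le_of_mem_map_mkQ {V : Submodule K (U →ₗ[K] Y)} {w : ℕ}
    (hV : ∀ f ∈ V, finrank K f.range ≤ w) {P : Submodule K Y} {g : U →ₗ[K] Y ⧸ P}
    (hg : g ∈ V.map (LinearMap.compRight K P.mkQ)) : finrank K g.range ≤ w := by
  obtain ⟨f, hf, rfl⟩ := hg
  rw [LinearMap.compRight_apply, LinearMap.range_comp]
  exact (Submodule.finrank_map_le _ _).trans (hV f hf)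

theorem le_span_singleton_of_forall_le {P : Submodule K Y} {y : Y} (hy : y ≠ 0)
    {w : ℕ} (h₁ : 1 ≤ w) (h₂ : w < finrank K Y)
    (h : ∀ R : Submodule K Y, y ∈ R → finrank K R = w → P ≤ R) : P ≤ K ∙ y := by
  intro z hzP
  by_contra hz
  obtain ⟨η, hηz, hη⟩ := Submodule.exists_le_ker_of_notMem hz
  have hη0 : η ≠ 0 := fun h0 ↦ hηz (by simp [h0])
  have hker := Dual.finrank_ker_add_one_of_ne_zero hη0
  obtain ⟨R, hyR, hRη, hR⟩ :=
    exists_between_finrank_eq (w := w) hη ((finrank_span_singleton hy).trans_le h₁) (by omega)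
  exact hηz (hRη (h R (hyR (Submodule.mem_span_singleton_self y)) hR hzP))

variable [FiniteDimensional K U]

theorem exists_le_ker_and_range_eq
    {S : Submodule K U} {R : Submodule K Y} (h : finrank K R ≤ finrank K (U ⧸ S)) :
    ∃ g : U →ₗ[K] Y, S ≤ g.ker ∧ g.range = R := by
  obtain ⟨g, hg⟩ := exists_surjective_of_finrank_le h
  refine ⟨R.subtype ∘ₗ g ∘ₗ S.mkQ, fun x hx ↦ ?_, ?_⟩
  · simp [(Submodule.Quotient.mk_eq_zero S).2 hx]
  · rw [LinearMap.range_comp, LinearMap.range_comp_of_range_eq_top _ S.range_mkQ,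
      LinearMap.range_eq_top.2 hg, Submodule.map_top, Submodule.range_subtype]

theorem finrank_homsVanishingOn {S : Submodule K U} {w : ℕ} (hS : finrank K S + w = finrank K U) :
    finrank K (homsVanishingOn S : Submodule K (U →ₗ[K] Y)) = w * finrank K Y := by
  have h := finrank_homsVanishingOn_add (Y := Y) S
  rw [← hS, add_mul] at h
  omega

theorem FlandersConclusion.of_le_homsVanishingOn {V : Submodule K (U →ₗ[K] Y)} {w : ℕ}
    {S : Submodule K U} (hS : finrank K S + w = finrank K U) (h : V ≤ homsVanishingOn S) :
    FlandersConclusion V w := by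
  rw [FlandersConclusion, ← finrank_homsVanishingOn hS]
  exact ⟨Submodule.finrank_mono h,
    fun heq ↦ .inl ⟨S, hS, Submodule.eq_of_le_of_finrank_eq h heq⟩⟩

theorem FlandersConclusion.of_le_homsInto (hUY : finrank K U = finrank K Y)
    {V : Submodule K (U →ₗ[K] Y)} {w : ℕ} {R : Submodule K Y} (hR : finrank K R = w)
    (h : V ≤ homsInto R) : FlandersConclusion V w := by
  have hdim := finrank_homsInto (U := U) R
  rw [hUY, hR, mul_comm] at hdim
  rw [FlandersConclusion, ← hdim]
  exact ⟨Submodule.finrank_mono h,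
    fun heq ↦ .inr ⟨hUY, R, hR, Submodule.eq_of_le_of_finrank_eq h heq⟩⟩

theorem finrank_le_of_quotient {V : Submodule K (U →ₗ[K] Y)} {w : ℕ}
    (hUY : finrank K U < finrank K Y) (hw₁ : 1 ≤ w) (hwU : w ≤ finrank K U)
    (hV : ∀ f ∈ V, finrank K f.range ≤ w) {y : Y} (hy : y ≠ 0)
    (ih : FlandersProperty K U (Y ⧸ K ∙ y)) :
    finrank K V ≤ w * finrank K Y ∧ (finrank K V = w * finrank K Y →
      finrank K (rankOneForms V y) = w ∧
      finrank K (V.map (LinearMap.compRight K (K ∙ y).mkQ)) = w * finrank K (Y ⧸ K ∙ y)) := by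
  have hsum := finrank_map_mkQ_add_finrank_rankOneForms V hy
  have hq := (K ∙ y).finrank_quotient_add_finrank
  rw [finrank_span_singleton hy] at hq
  rw [← hq, mul_add_one]
  obtain hr | hr := le_or_gt (finrank K (rankOneForms V y)) w
  · have := (ih _ w hwU fun g ↦ finrank_range_le_of_mem_map_mkQ hV).1
    omega
  · obtain ⟨v, rfl⟩ := Nat.exists_eq_add_of_le' hw₁
    have := (ih _ v (by omega) fun g hg ↦
      Nat.le_of_lt_succ (finrank_range_lt_of_mem_map_mkQ hV hy hr hg)).1
    have hdual := (rankOneForms V y).finrank_le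
    rw [Subspace.dual_finrank_eq] at hdual
    rw [add_one_mul]
    omega

theorem exists_map_mkQ_eq_homsVanishingOn {V : Submodule K (U →ₗ[K] Y)} {w : ℕ}
    (hw₁ : 1 ≤ w) (hwU : w < finrank K U)
    (hV : ∀ f ∈ V, finrank K f.range ≤ w) {y : Y} (hy : y ≠ 0)
    (hforms : finrank K (rankOneForms V y) = w)
    (h : FlandersConclusion (V.map (LinearMap.compRight K (K ∙ y).mkQ)) w)
    (hdim : finrank K (V.map (LinearMap.compRight K (K ∙ y).mkQ)) = w * finrank K (Y ⧸ K ∙ y)) :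
    ∃ S : Submodule K U, finrank K S + w = finrank K U ∧
      V.map (LinearMap.compRight K (K ∙ y).mkQ) = homsVanishingOn S := by
  refine (h.2 hdim).resolve_right ?_
  rintro ⟨-, R, hR, hVR⟩
  obtain ⟨φ, hφ, hφ0⟩ := (rankOneForms V y).ne_bot_iff.1
    (Submodule.one_le_finrank_iff.1 (hw₁.trans hforms.ge))
  obtain ⟨e, he⟩ := LinearMap.surjective hφ0 1
  have hquot := (K ∙ e).finrank_quotient_add_finrank
  rw [finrank_span_singleton fun h0 ↦ by simp [h0] at he] at hquot
  obtain ⟨g, hge, hgR⟩ := exists_le_ker_and_range_eq (S := K ∙ e) (R := R) (by omega)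
  obtain ⟨f, hf, rfl⟩ : g ∈ V.map (LinearMap.compRight K (K ∙ y).mkQ) :=
    hVR ▸ mem_homsInto.2 hgR.le
  have hfe : f e ∈ K ∙ y :=
    (Submodule.Quotient.mk_eq_zero _).1 (hge (Submodule.mem_span_singleton_self e))
  have hlt := finrank_range_mkQ_comp_lt hV hy hφ hf hfe (by simp [he])
  rw [LinearMap.compRight_apply] at hgR
  rw [hgR] at hlt
  omega

theorem flandersConclusion_of_finrank_lt {V : Submodule K (U →ₗ[K] Y)} {w : ℕ}
    (hUY : finrank K U < finrank K Y) (hw₁ : 1 ≤ w) (hwU : w < finrank K U)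
    (hV : ∀ f ∈ V, finrank K f.range ≤ w)
    (ih : ∀ y : Y, y ≠ 0 → FlandersProperty K U (Y ⧸ K ∙ y)) : FlandersConclusion V w := by
  obtain ⟨y₁, hy₁⟩ := exists_notMem_of_finrank_lt (K := K) (R := (⊥ : Submodule K Y))
    (by rw [finrank_bot]; omega)
  refine ⟨(finrank_le_of_quotient hUY hw₁ hwU.le hV hy₁ (ih y₁ hy₁)).1, fun heq ↦ ?_⟩
  have hquot (y : Y) (hy : y ≠ 0) : ∃ S : Submodule K U, finrank K S + w = finrank K U ∧
      V.map (LinearMap.compRight K (K ∙ y).mkQ) = homsVanishingOn S := by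
    obtain ⟨hforms, hdim⟩ := (finrank_le_of_quotient hUY hw₁ hwU.le hV hy (ih y hy)).2 heq
    exact exists_map_mkQ_eq_homsVanishingOn hw₁ hwU hV hy hforms
      (ih y hy _ w hwU.le fun g ↦ finrank_range_le_of_mem_map_mkQ hV) hdim
  obtain ⟨y₂, hy₂⟩ := exists_notMem_of_finrank_lt (R := K ∙ y₁)
    (by rw [finrank_span_singleton hy₁]; omega)
  have hy₂0 : y₂ ≠ 0 := fun h ↦ hy₂ (h ▸ zero_mem _)
  obtain ⟨z, hz⟩ := exists_notMem_of_finrank_lt (R := K ∙ y₁ ⊔ K ∙ y₂)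
    (by rw [Submodule.finrank_sup_span_singleton hy₂, finrank_span_singleton hy₁]; omega)
  obtain ⟨S₁, hS₁, hV₁⟩ := hquot y₁ hy₁
  obtain ⟨S₂, hS₂, hV₂⟩ := hquot y₂ hy₂0
  obtain rfl : S₁ = S₂ :=
    le_antisymm (le_of_map_mkQ_eq_homsVanishingOn (sup_comm (K ∙ y₁) _ ▸ hz) hV₂ hV₁.le)
      (le_of_map_mkQ_eq_homsVanishingOn hz hV₁ hV₂.le)
  have hdisj := (Submodule.disjoint_span_singleton' hy₂0).2 hy₂
  exact (FlandersConclusion.of_le_homsVanishingOn hS₁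
    (le_homsVanishingOn_of_map_mkQ_le hdisj hV₁.le hV₂.le)).2 heq

end Classification

section Square

variable {K U Y : Type*} [Field K] [AddCommGroup U] [Module K U] [AddCommGroup Y] [Module K Y]

theorem domRestrict'_injOn_of_rankOneVectors_eq_bot {V : Submodule K (U →ₗ[K] Y)} {φ : Dual K U}
    (hφ : φ ≠ 0) (h : rankOneVectors V φ = ⊥) :
    Set.InjOn (LinearMap.domRestrict' φ.ker) (V : Set (U →ₗ[K] Y)) := by
  intro f hf g hg hfg
  obtain ⟨y, hy⟩ := (exact_smulRightₗ_domRestrict' hφ (f - g)).1 (by rw [map_sub, hfg, sub_self])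
  have hyV : y ∈ rankOneVectors V φ := Submodule.mem_comap.2 (hy ▸ sub_mem hf hg)
  rw [h, Submodule.mem_bot] at hyV
  rwa [hyV, map_zero, eq_comm, sub_eq_zero] at hy

variable [FiniteDimensional K U]

theorem finrank_range_le_of_mem_map_domRestrict' {V : Submodule K (U →ₗ[K] Y)} {w : ℕ}
    (hV : ∀ f ∈ V, finrank K f.range ≤ w) {H : Submodule K U} {g : H →ₗ[K] Y}
    (hg : g ∈ V.map (LinearMap.domRestrict' H)) : finrank K g.range ≤ w := by
  obtain ⟨f, hf, rfl⟩ := hg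
  change finrank K (f.domRestrict H).range ≤ w
  rw [LinearMap.range_domRestrict]
  exact (Submodule.finrank_mono LinearMap.map_le_range).trans (hV f hf)

theorem homsInto_le_of_rankOneForms_eq_top {V : Submodule K (U →ₗ[K] Y)} {R : Submodule K Y}
    (h : ∀ y ∈ R, rankOneForms V y = ⊤) : homsInto R ≤ V := by
  intro f hf
  rw [← sum_coord_smulRight (finBasis K U) f]
  refine sum_mem fun i _ ↦ mem_rankOneForms.1 ?_
  rw [h _ (mem_homsInto.1 hf ⟨_, rfl⟩)]
  exact Submodule.mem_top

variable [FiniteDimensional K Y]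

theorem range_le_span_singleton_of_domRestrict'_eq_smulRight {V : Submodule K (U →ₗ[K] Y)} {w : ℕ}
    (hw₁ : 1 ≤ w) (hwY : w < finrank K Y) (hV : ∀ f ∈ V, finrank K f.range ≤ w)
    {φ : Dual K U} (hφ : φ ≠ 0) (hbot : rankOneVectors V φ = ⊥) {S : Submodule K φ.ker}
    (hS : w ≤ finrank K (φ.ker ⧸ S))
    (hVS : homsVanishingOn S ≤ V.map (LinearMap.domRestrict' φ.ker))
    {ℓ : Dual K φ.ker} (hℓ : S ≤ ℓ.ker) {y : Y} (hy : y ≠ 0) {f : U →ₗ[K] Y} (hf : f ∈ V)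
    (hfℓ : LinearMap.domRestrict' φ.ker f = ℓ.smulRight y) : f.range ≤ K ∙ y := by
  refine le_span_singleton_of_forall_le hy hw₁ hwY fun R hyR hR ↦ ?_
  obtain ⟨g, ⟨hgV, hgR⟩, hgℓ⟩ := homsVanishingOn_inf_homsInto_le_map_domRestrict' hV hR hS
    (inf_le_left.trans hVS) ⟨smulRight_mem_homsVanishingOn hℓ y, smulRight_mem_homsInto ℓ hyR⟩
  rw [domRestrict'_injOn_of_rankOneVectors_eq_bot hφ hbot hf hgV (hfℓ.trans hgℓ.symm)]
  exact mem_homsInto.1 hgR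

theorem exists_rankOneVectors_ne_bot {V : Submodule K (U →ₗ[K] Y)} {w : ℕ}
    (hUY : finrank K U = finrank K Y) (hw₁ : 1 ≤ w) (hwU : w < finrank K U)
    (hV : ∀ f ∈ V, finrank K f.range ≤ w) {φ : Dual K U} (hφ : φ ≠ 0)
    (ih : FlandersProperty K φ.ker Y) (hdim : finrank K V = w * finrank K Y) :
    ∃ ψ : Dual K U, ψ ≠ 0 ∧ rankOneVectors V ψ ≠ ⊥ := by
  by_contra! hbot
  have hker := Dual.finrank_ker_add_one_of_ne_zero hφ
  have hsum := finrank_map_domRestrict'_add_finrank_rankOneVectors V hφ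
  rw [hbot φ hφ, finrank_bot, add_zero, hdim] at hsum
  obtain ⟨S, hS, hVS⟩ := ((ih _ w (by omega) fun g ↦
    finrank_range_le_of_mem_map_domRestrict' hV).2 hsum).resolve_right (by omega)
  have hquot := S.finrank_quotient_add_finrank
  obtain ⟨ℓ, hℓ, hSℓ⟩ := Submodule.exists_le_ker_of_lt_top S
    (lt_top_iff_ne_top.2 fun h ↦ by rw [h, finrank_top] at hS; omega)
  obtain ⟨y, hy⟩ := exists_notMem_of_finrank_lt (K := K) (R := (⊥ : Submodule K Y))
    (by rw [finrank_bot]; omega)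
  have hy0 : y ≠ 0 := hy
  obtain ⟨f, hf, hfℓ⟩ : ℓ.smulRight y ∈ V.map (LinearMap.domRestrict' φ.ker) :=
    hVS ▸ smulRight_mem_homsVanishingOn hSℓ y
  have hrange := range_le_span_singleton_of_domRestrict'_eq_smulRight hw₁ (hUY ▸ hwU) hV hφ
    (hbot φ hφ) (by omega) hVS.ge hSℓ hy0 hf hfℓ
  obtain ⟨ψ, rfl⟩ := (exact_smulRightₗ_flip_mkQ hy0 f).1
    (LinearMap.ext fun u ↦ (Submodule.Quotient.mk_eq_zero _).2 (hrange ⟨u, rfl⟩))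
  have hψ : ψ ≠ 0 := by
    rintro rfl
    rw [map_zero, map_zero] at hfℓ
    exact hℓ (LinearMap.ext fun u ↦ (smul_eq_zero_iff_left hy0).1 (LinearMap.congr_fun hfℓ.symm u))
  have hyψ : y ∈ rankOneVectors V ψ := mem_rankOneVectors.2 hf
  rw [hbot ψ hψ] at hyψ
  exact hy0 hyψ

theorem flandersConclusion_of_lt_finrank_rankOneVectors {V : Submodule K (U →ₗ[K] Y)} {w : ℕ}
    (hUY : finrank K U = finrank K Y) (hw₁ : 1 ≤ w) (hwU : w < finrank K U)
    (hV : ∀ f ∈ V, finrank K f.range ≤ w) {φ : Dual K U} (hφ : φ ≠ 0)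
    (ih : FlandersProperty K φ.ker Y) (hw : w < finrank K (rankOneVectors V φ)) :
    FlandersConclusion V w := by
  obtain ⟨v, rfl⟩ := Nat.exists_eq_add_of_le' hw₁
  have hker := Dual.finrank_ker_add_one_of_ne_zero hφ
  have hsum := finrank_map_domRestrict'_add_finrank_rankOneVectors V hφ
  have hle := (rankOneVectors V φ).finrank_le
  obtain ⟨hbound, heq⟩ := ih (V.map (LinearMap.domRestrict' φ.ker)) v (by omega) fun g hg ↦
    Nat.le_of_lt_succ (finrank_range_lt_of_mem_map_domRestrict' hV hφ hw hg)
  refine ⟨by rw [add_one_mul]; omega, fun hdim ↦ ?_⟩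
  rw [add_one_mul] at hdim
  obtain ⟨S, hS, hVS⟩ := (heq (by omega)).resolve_right (by omega)
  have hSmap : finrank K (S.map φ.ker.subtype) + (v + 1) = finrank K U := by
    rw [Submodule.finrank_map_subtype_eq]
    omega
  refine (FlandersConclusion.of_le_homsVanishingOn hSmap fun f hf ↦ ?_).2
    (by rw [hdim, add_one_mul])
  rw [mem_homsVanishingOn, Submodule.map_le_iff_le_comap, ← LinearMap.ker_comp]
  exact mem_homsVanishingOn.1 (hVS ▸ Submodule.mem_map_of_mem hf)

theorem finrank_range_mkQ_comp_domRestrict_lt {V : Submodule K (U →ₗ[K] Y)} {w : ℕ}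
    (hV : ∀ f ∈ V, finrank K f.range ≤ w) {φ : Dual K U} (hφ : φ ≠ 0) {y : Y} (hy : y ≠ 0)
    (hyV : y ∈ rankOneVectors V φ) {g : φ.ker →ₗ[K] Y ⧸ K ∙ y}
    (hg : g ∈ (V.map (LinearMap.domRestrict' φ.ker)).map (LinearMap.compRight K (K ∙ y).mkQ)) :
    finrank K g.range < w := by
  obtain ⟨-, ⟨f, hf, rfl⟩, rfl⟩ := hg
  change finrank K ((K ∙ y).mkQ ∘ₗ f.domRestrict φ.ker).range < w
  rw [LinearMap.range_comp, LinearMap.range_domRestrict]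
  by_cases hyf : y ∈ φ.ker.map f
  · exact (finrank_map_mkQ_lt hy hyf).trans_le
      ((Submodule.finrank_mono LinearMap.map_le_range).trans (hV f hf))
  · exact (Submodule.finrank_map_le _ _).trans_lt (finrank_map_ker_lt_of_notMem hV hφ hyV hf hyf)

theorem finrank_map_domRestrict'_le {V : Submodule K (U →ₗ[K] Y)} {w : ℕ}
    (hUY : finrank K U = finrank K Y) (hwU : w < finrank K U)
    (hV : ∀ f ∈ V, finrank K f.range ≤ w + 1) {φ : Dual K U} (hφ : φ ≠ 0)
    {y : Y} (hy : y ≠ 0) (ih : FlandersProperty K φ.ker (Y ⧸ K ∙ y))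
    (hyV : y ∈ rankOneVectors V φ) :
    finrank K (V.map (LinearMap.domRestrict' φ.ker)) + (w + 1) ≤ (w + 1) * finrank K Y ∧
    (finrank K (V.map (LinearMap.domRestrict' φ.ker)) + (w + 1) = (w + 1) * finrank K Y →
      rankOneForms (V.map (LinearMap.domRestrict' φ.ker)) y = ⊤) := by
  have hker := Dual.finrank_ker_add_one_of_ne_zero hφ
  have hquot := (K ∙ y).finrank_quotient_add_finrank
  rw [finrank_span_singleton hy] at hquot
  have hsum := finrank_map_mkQ_add_finrank_rankOneForms (V.map (LinearMap.domRestrict' φ.ker)) hy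
  have hbound := (ih _ w (by omega) fun g hg ↦
    Nat.le_of_lt_succ (finrank_range_mkQ_comp_domRestrict_lt hV hφ hy hyV hg)).1
  have hforms := (rankOneForms (V.map (LinearMap.domRestrict' φ.ker)) y).finrank_le
  have hdual := Subspace.dual_finrank_eq (K := K) (V := φ.ker)
  rw [← hquot, mul_add_one, add_one_mul]
  exact ⟨by omega, fun heq ↦ Submodule.eq_top_of_finrank_eq (by omega)⟩

theorem le_homsInto_rankOneVectors {V : Submodule K (U →ₗ[K] Y)} {w : ℕ}
    (hV : ∀ f ∈ V, finrank K f.range ≤ w) {φ : Dual K U} (hφ : φ ≠ 0) (hw : w ≤ finrank K φ.ker)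
    (hR : finrank K (rankOneVectors V φ) = w)
    (h : V.map (LinearMap.domRestrict' φ.ker) = homsInto (rankOneVectors V φ)) :
    V ≤ homsInto (rankOneVectors V φ) := by
  intro f hf
  obtain ⟨g, ⟨hgV, hgR⟩, hgf⟩ := homsVanishingOn_inf_homsInto_le_map_domRestrict' hV
    (S := (⊥ : Submodule K φ.ker)) hR (by rwa [(Submodule.quotEquivOfEqBot ⊥ rfl).finrank_eq])
    (inf_le_right.trans h.ge)
    ⟨mem_homsVanishingOn.2 bot_le, h ▸ Submodule.mem_map_of_mem hf⟩
  obtain ⟨y, hy⟩ := (exact_smulRightₗ_domRestrict' hφ (f - g)).1 (by rw [map_sub, hgf, sub_self])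
  have hyR : y ∈ rankOneVectors V φ := Submodule.mem_comap.2 (hy ▸ sub_mem hf hgV)
  rw [← sub_add_cancel f g, ← hy]
  exact add_mem (smulRight_mem_homsInto φ hyR) hgR

theorem flandersConclusion_of_finrank_rankOneVectors_le {V : Submodule K (U →ₗ[K] Y)} {w : ℕ}
    (hUY : finrank K U = finrank K Y) (hwU : w < finrank K U)
    (hV : ∀ f ∈ V, finrank K f.range ≤ w) {φ : Dual K U} (hφ : φ ≠ 0)
    (ih : ∀ y : Y, y ≠ 0 → FlandersProperty K φ.ker (Y ⧸ K ∙ y))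
    (hbot : rankOneVectors V φ ≠ ⊥) (hw : finrank K (rankOneVectors V φ) ≤ w) :
    FlandersConclusion V w := by
  obtain ⟨v, rfl⟩ := Nat.exists_eq_add_of_le' ((Submodule.one_le_finrank_iff.2 hbot).trans hw)
  have hker := Dual.finrank_ker_add_one_of_ne_zero hφ
  have hsum := finrank_map_domRestrict'_add_finrank_rankOneVectors V hφ
  have hmap (y : Y) (hyV : y ∈ rankOneVectors V φ) (hy : y ≠ 0) :=
    finrank_map_domRestrict'_le hUY (by omega) hV hφ hy (ih y hy) hyV
  obtain ⟨y, hyV, hy⟩ := (Submodule.ne_bot_iff _).1 hbot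
  have hbound := (hmap y hyV hy).1
  refine ⟨by omega, fun hdim ↦ ?_⟩
  have hR : finrank K (rankOneVectors V φ) = v + 1 := by omega
  have hle : homsInto (rankOneVectors V φ) ≤ V.map (LinearMap.domRestrict' φ.ker) := by
    refine homsInto_le_of_rankOneForms_eq_top fun z hzV ↦ ?_
    obtain rfl | hz := eq_or_ne z 0
    · exact eq_top_iff.2 fun ψ _ ↦ mem_rankOneForms.2 (by simp)
    · exact (hmap z hzV hz).2 (by omega)
  have hfinrank := finrank_homsInto (U := φ.ker) (rankOneVectors V φ)
  have hmul : finrank K φ.ker * (v + 1) + (v + 1) = (v + 1) * finrank K Y := by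
    rw [← add_one_mul, hker, hUY, mul_comm]
  rw [hR] at hfinrank
  have heq := Submodule.eq_of_le_of_finrank_eq hle (by omega)
  exact (FlandersConclusion.of_le_homsInto hUY hR
    (le_homsInto_rankOneVectors hV hφ (by omega) hR heq.symm)).2 hdim

theorem flandersConclusion_of_finrank_eq {V : Submodule K (U →ₗ[K] Y)} {w : ℕ}
    (hUY : finrank K U = finrank K Y) (hw₁ : 1 ≤ w) (hwU : w < finrank K U)
    (hV : ∀ f ∈ V, finrank K f.range ≤ w)
    (ih : ∀ φ : Dual K U, φ ≠ 0 → FlandersProperty K φ.ker Y)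
    (ih' : ∀ φ : Dual K U, φ ≠ 0 → ∀ y : Y, y ≠ 0 → FlandersProperty K φ.ker (Y ⧸ K ∙ y)) :
    FlandersConclusion V w := by
  have hcases {φ : Dual K U} (hφ : φ ≠ 0) (hbot : rankOneVectors V φ ≠ ⊥) :
      FlandersConclusion V w := by
    obtain hw | hw := le_or_gt (finrank K (rankOneVectors V φ)) w
    · exact flandersConclusion_of_finrank_rankOneVectors_le hUY hwU hV hφ (ih' φ hφ) hbot hw
    · exact flandersConclusion_of_lt_finrank_rankOneVectors hUY hw₁ hwU hV hφ (ih φ hφ) hw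
  have : Nontrivial U := nontrivial_of_finrank_pos (R := K) (by omega)
  obtain ⟨φ, hφ⟩ := exists_ne (0 : Dual K U)
  by_cases hbot : rankOneVectors V φ = ⊥
  · have hker := Dual.finrank_ker_add_one_of_ne_zero hφ
    have hsum := finrank_map_domRestrict'_add_finrank_rankOneVectors V hφ
    rw [hbot, finrank_bot, add_zero] at hsum
    refine ⟨hsum ▸ (ih φ hφ _ w (by omega) fun g ↦ finrank_range_le_of_mem_map_domRestrict' hV).1,
      fun hdim ↦ ?_⟩
    obtain ⟨ψ, hψ, hψbot⟩ := exists_rankOneVectors_ne_bot hUY hw₁ hwU hV hφ (ih φ hφ) hdim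
    exact (hcases hψ hψbot).2 hdim
  · exact hcases hφ hbot

end Square

section Flanders

theorem flandersProperty {K : Type*} [Field K] {U Y : Type*} [AddCommGroup U] [Module K U]
    [AddCommGroup Y] [Module K Y] [FiniteDimensional K U] [FiniteDimensional K Y]
    (hUY : finrank K U ≤ finrank K Y) : FlandersProperty K U Y := by
  induction hN : finrank K U + finrank K Y using Nat.strong_induction_on generalizing U Y with
  | _ N ih =>
  subst hN
  have hker {φ : Dual K U} (hφ : φ ≠ 0) := Dual.finrank_ker_add_one_of_ne_zero hφ
  have hquot {y : Y} (hy : y ≠ 0) : finrank K (Y ⧸ K ∙ y) + 1 = finrank K Y := by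
    rw [← finrank_span_singleton (K := K) hy, Submodule.finrank_quotient_add_finrank]
  intro V w hwU hV
  obtain rfl | hw₁ := w.eq_zero_or_pos
  · refine FlandersConclusion.of_le_homsVanishingOn (S := ⊤) (by simp) fun f hf ↦ ?_
    rw [mem_homsVanishingOn, top_le_iff, LinearMap.ker_eq_top, ← LinearMap.range_eq_bot]
    exact Submodule.finrank_eq_zero.1 (Nat.le_zero.1 (hV f hf))
  obtain rfl | hwU := hwU.eq_or_lt
  · exact FlandersConclusion.of_le_homsVanishingOn (S := ⊥) (by simp)
      fun f _ ↦ mem_homsVanishingOn.2 bot_le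
  obtain heq | hlt := hUY.eq_or_lt
  · refine flandersConclusion_of_finrank_eq heq hw₁ hwU hV (fun φ hφ ↦ ?_) fun φ hφ y hy ↦ ?_
    · have := hker hφ
      exact ih _ (by omega) (by omega) rfl
    · have := hker hφ
      have := hquot hy
      exact ih _ (by omega) (by omega) rfl
  · refine flandersConclusion_of_finrank_lt hlt hw₁ hwU hV fun y hy ↦ ?_
    have := hquot hy
    exact ih _ (by omega) (by omega) rfl

variable {K U Y : Type*} [Field K] [AddCommGroup U] [Module K U] [AddCommGroup Y] [Module K Y]
  [FiniteDimensional K U] [FiniteDimensional K Y]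

theorem exists_le_finrank_eq_of_finrank_eq {V : Submodule K (U →ₗ[K] Y)} {w : ℕ}
    (hUY : finrank K U ≤ finrank K Y) (hwU : w + 1 ≤ finrank K U)
    (hV : ∀ f ∈ V, finrank K f.range ≤ w + 1) (hdim : finrank K V = (w + 1) * finrank K Y) :
    ∃ V' ≤ V, finrank K V' = w * finrank K Y ∧ ∀ f ∈ V', finrank K f.range ≤ w := by
  obtain ⟨S, hS, rfl⟩ | ⟨heq, R, hR, rfl⟩ := (flandersProperty hUY V (w + 1) hwU hV).2 hdim
  · obtain ⟨S', hSS', -, hS'⟩ := exists_between_finrank_eq (le_top : S ≤ ⊤)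
      (w := finrank K S + 1) (by omega) (by rw [finrank_top]; omega)
    refine ⟨homsVanishingOn S', fun f hf ↦ mem_homsVanishingOn.2
      (hSS'.trans (mem_homsVanishingOn.1 hf)), finrank_homsVanishingOn (by omega), fun f hf ↦ ?_⟩
    have := f.finrank_range_add_finrank_ker
    have := Submodule.finrank_mono (mem_homsVanishingOn.1 hf)
    omega
  · obtain ⟨R', -, hR'R, hR'⟩ := exists_between_finrank_eq (bot_le : ⊥ ≤ R)
      (w := w) (by simp) (by omega)
    refine ⟨homsInto R', fun f hf ↦ mem_homsInto.2 ((mem_homsInto.1 hf).trans hR'R), ?_,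
      fun f hf ↦ hR' ▸ Submodule.finrank_mono (mem_homsInto.1 hf)⟩
    rw [finrank_homsInto, hR', heq, mul_comm]

end Flanders

section Anticodes

variable {K : Type*} [Field K] {m n r v w : ℕ} {𝒜 𝒞 𝒟 : Submodule K (Matrix (Fin m) (Fin n) K)}

theorem rank_le_maxrank {A : Matrix (Fin m) (Fin n) K} (hA : A ∈ 𝒜) : A.rank ≤ maxrank 𝒜 :=
  le_csSup ⟨n, fun _ ⟨B, _, hB⟩ ↦ hB ▸ B.rank_le_width⟩ ⟨A, hA, rfl⟩

theorem maxrank_le_iff : maxrank 𝒜 ≤ w ↔ ∀ A ∈ 𝒜, A.rank ≤ w :=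
  ⟨fun h _ hA ↦ (rank_le_maxrank hA).trans h,
    fun h ↦ csSup_le ⟨0, 0, 𝒜.zero_mem, Matrix.rank_zero⟩ fun _ ⟨A, hA, hw⟩ ↦ hw ▸ h A hA⟩

theorem maxrank_le_width : maxrank 𝒜 ≤ n :=
  maxrank_le_iff.2 fun A _ ↦ A.rank_le_width

theorem finrank_map_toLin' (𝒜 : Submodule K (Matrix (Fin m) (Fin n) K)) :
    finrank K (𝒜.map (Matrix.toLin' : Matrix (Fin m) (Fin n) K ≃ₗ[K] _).toLinearMap) =
      finrank K 𝒜 :=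
  LinearEquiv.finrank_map_eq _ _

theorem finrank_le_mul_maxrank (hnm : n ≤ m) : finrank K 𝒜 ≤ m * maxrank 𝒜 := by
  have hF := flandersProperty (K := K) (U := Fin n → K) (Y := Fin m → K) (by simpa using hnm)
    (𝒜.map Matrix.toLin'.toLinearMap) (maxrank 𝒜) (by simpa using maxrank_le_width)
    fun _ ⟨A, hA, hf⟩ ↦ hf ▸ rank_le_maxrank hA
  rw [mul_comm]
  simpa only [finrank_map_toLin', finrank_fin_fun] using hF.1

theorem isOptAnticode_of_finrank_eq (hnm : n ≤ m) (hdim : finrank K 𝒜 = m * w)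
    (hw : ∀ A ∈ 𝒜, A.rank ≤ w) : IsOptAnticode 𝒜 :=
  (finrank_le_mul_maxrank hnm).antisymm (hdim ▸ Nat.mul_le_mul_left m (maxrank_le_iff.2 hw))

theorem isOptAnticode_top (hnm : n ≤ m) :
    IsOptAnticode (⊤ : Submodule K (Matrix (Fin m) (Fin n) K)) :=
  isOptAnticode_of_finrank_eq (w := n) hnm (by simp [finrank_matrix]) fun A _ ↦ A.rank_le_width

theorem IsOptAnticode.exists_le (h𝒜 : IsOptAnticode 𝒜) (hnm : n ≤ m) (hv : maxrank 𝒜 = v + 1) :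
    ∃ ℬ ≤ 𝒜, IsOptAnticode ℬ ∧ maxrank ℬ ≤ v ∧ finrank K ℬ + m = finrank K 𝒜 := by
  have hdim : finrank K 𝒜 = (v + 1) * m := by rw [h𝒜, hv, mul_comm]
  obtain ⟨V, hV, hVdim, hVrank⟩ := exists_le_finrank_eq_of_finrank_eq (K := K)
    (U := Fin n → K) (Y := Fin m → K) (V := 𝒜.map Matrix.toLin'.toLinearMap) (w := v)
    (by simpa using hnm) (by simpa [hv] using maxrank_le_width (𝒜 := 𝒜))
    (fun _ ⟨A, hA, hf⟩ ↦ hf ▸ hv ▸ rank_le_maxrank hA)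
    (by rw [finrank_map_toLin', finrank_fin_fun, hdim])
  obtain ⟨ℬ, rfl⟩ : ∃ ℬ : Submodule K (Matrix (Fin m) (Fin n) K),
      ℬ.map Matrix.toLin'.toLinearMap = V :=
    ⟨_, Submodule.map_comap_eq_of_surjective Matrix.toLin'.surjective V⟩
  have hℬ : ∀ B ∈ ℬ, B.rank ≤ v := fun B hB ↦ hVrank _ ⟨B, hB, rfl⟩
  rw [finrank_map_toLin', finrank_fin_fun, mul_comm] at hVdim
  exact ⟨ℬ, (Submodule.map_le_map_iff_of_injective Matrix.toLin'.injective ℬ 𝒜).1 hV,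
    isOptAnticode_of_finrank_eq hnm hVdim hℬ, maxrank_le_iff.2 hℬ, by rw [hVdim, hdim]; ring⟩

theorem rkWt_le_iff (hnm : n ≤ m) :
    rkWt 𝒟 ≤ w ↔ ∃ 𝒜, IsOptAnticode 𝒜 ∧ 𝒟 ≤ 𝒜 ∧ maxrank 𝒜 ≤ w := by
  refine ⟨fun h ↦ ?_, fun ⟨𝒜, h𝒜, h𝒟, hw⟩ ↦ le_trans (Nat.sInf_le ⟨𝒜, h𝒜, h𝒟, rfl⟩) hw⟩
  obtain ⟨𝒜, h𝒜, h𝒟, hw⟩ := Nat.sInf_mem (s := {w | ∃ 𝒜, IsOptAnticode 𝒜 ∧ 𝒟 ≤ 𝒜 ∧ maxrank 𝒜 = w})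
    ⟨_, ⊤, isOptAnticode_top hnm, le_top, rfl⟩
  exact ⟨𝒜, h𝒜, h𝒟, hw.trans_le h⟩

theorem grw_le_iff (hnm : n ≤ m) (hr : r ≤ finrank K 𝒞) :
    grw 𝒞 r ≤ w ↔ ∃ 𝒜, IsOptAnticode 𝒜 ∧ maxrank 𝒜 ≤ w ∧ r ≤ finrank K ↥(𝒞 ⊓ 𝒜) := by
  constructor
  · intro h
    obtain ⟨𝒟, h𝒟, hr𝒟, hw⟩ := Nat.sInf_mem
      (s := {w | ∃ 𝒟 ≤ 𝒞, r ≤ finrank K 𝒟 ∧ rkWt 𝒟 = w}) ⟨_, 𝒞, le_rfl, hr, rfl⟩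
    obtain ⟨𝒜, h𝒜, h𝒟𝒜, hw𝒜⟩ := (rkWt_le_iff hnm).1 (hw.trans_le h)
    exact ⟨𝒜, h𝒜, hw𝒜, hr𝒟.trans (Submodule.finrank_mono (le_inf h𝒟 h𝒟𝒜))⟩
  · rintro ⟨𝒜, h𝒜, hw, hr𝒜⟩
    exact le_trans (Nat.sInf_le ⟨𝒞 ⊓ 𝒜, inf_le_left, hr𝒜, rfl⟩)
      ((rkWt_le_iff hnm).2 ⟨𝒜, h𝒜, inf_le_right, hw⟩)

theorem grw_le_width (hnm : n ≤ m) (hr : r ≤ finrank K 𝒞) : grw 𝒞 r ≤ n :=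
  (grw_le_iff hnm hr).2 ⟨⊤, isOptAnticode_top hnm, maxrank_le_width, by rwa [inf_top_eq]⟩

theorem grw_le_of_grw_add_le (hnm : n ≤ m) (hr : r + m ≤ finrank K 𝒞)
    (h : grw 𝒞 (r + m) ≤ v + 1) : grw 𝒞 r ≤ v := by
  obtain ⟨𝒜, h𝒜, hv, hr𝒜⟩ := (grw_le_iff hnm hr).1 h
  rw [grw_le_iff hnm (by omega)]
  obtain hv | hv := hv.lt_or_eq
  · exact ⟨𝒜, h𝒜, Nat.le_of_lt_succ hv, by omega⟩
  obtain ⟨ℬ, hℬ𝒜, hℬ, hvℬ, hdim⟩ := h𝒜.exists_le hnm hv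
  have hsup := Submodule.finrank_mono (sup_le inf_le_right hℬ𝒜 : 𝒞 ⊓ 𝒜 ⊔ ℬ ≤ 𝒜)
  have hinf := Submodule.finrank_sup_add_finrank_inf_eq (𝒞 ⊓ 𝒜) ℬ
  rw [inf_assoc, inf_eq_right.2 hℬ𝒜] at hinf
  exact ⟨ℬ, hℬ, hvℬ, by omega⟩

end Anticodes

theorem grw_lt_grw_add {K : Type*} [Field K] {m n r : ℕ}
    {𝒞 : Submodule K (Matrix (Fin m) (Fin n) K)} (hnm : n ≤ m) (hr : 0 < r)
    (hrm : r + m ≤ finrank K 𝒞) : grw 𝒞 r < grw 𝒞 (r + m) := by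
  obtain h0 | hpos := (grw 𝒞 (r + m)).eq_zero_or_pos
  · obtain ⟨𝒜, h𝒜, hw, hr𝒜⟩ := (grw_le_iff hnm hrm).1 h0.le
    have hdim : finrank K 𝒜 = 0 := by rw [h𝒜, Nat.le_zero.1 hw, mul_zero]
    have hle := Submodule.finrank_mono (inf_le_right : 𝒞 ⊓ 𝒜 ≤ 𝒜)
    omega
  · obtain ⟨v, hv⟩ := Nat.exists_eq_add_of_le' hpos
    exact hv ▸ Nat.lt_succ_of_le (grw_le_of_grw_add_le hnm hrm hv.le)

section Counting

variable {α : Type*} [LinearOrder α] {k m : ℕ} {d : Fin k → α}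

theorem val_lt_card_filter_le_iff (hd : Monotone d) {r : Fin k} {u : α} :
    r.1 < (Finset.univ.filter (fun s ↦ d s ≤ u)).card ↔ d r ≤ u := by
  constructor
  · contrapose!
    intro hr
    refine (Finset.card_le_card fun s hs ↦ ?_).trans_eq (Fin.card_Iio r)
    exact Finset.mem_Iio.2 (hd.reflect_lt ((Finset.mem_filter.1 hs).2.trans_lt hr))
  · intro hr
    rw [← Nat.succ_le_iff, Nat.succ_eq_add_one, ← Fin.card_Iic]
    exact Finset.card_le_card fun s hs ↦
      Finset.mem_filter.2 ⟨Finset.mem_univ s, (hd (Finset.mem_Iic.1 hs)).trans hr⟩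

theorem card_filter_eq_le (hd : Monotone d) (hlt : ∀ s t : Fin k, s.1 + m = t.1 → d s < d t)
    (v : α) : (Finset.univ.filter (fun r ↦ d r = v)).card ≤ m := by
  obtain hempty | hne := (Finset.univ.filter (fun r ↦ d r = v)).eq_empty_or_nonempty
  · simp only [hempty, Finset.card_empty, zero_le]
  obtain ⟨s, hs, hmin⟩ := Finset.exists_min_image _ Fin.val hne
  have hsub : (Finset.univ.filter (fun r ↦ d r = v)).map Fin.valEmbedding ⊆
      Finset.Ico s.1 (s.1 + m) := by
    intro x hx
    obtain ⟨t, ht, rfl⟩ := Finset.mem_map.1 hx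
    refine Finset.mem_Ico.2 ⟨hmin t ht, not_le.1 fun hst ↦ ?_⟩
    have hdt : d ⟨s.1 + m, hst.trans_lt t.2⟩ ≤ d t := hd hst
    have hds := hlt s ⟨s.1 + m, hst.trans_lt t.2⟩ rfl
    rw [(Finset.mem_filter.1 hs).2] at hds
    rw [(Finset.mem_filter.1 ht).2] at hdt
    exact (hds.trans_le hdt).false
  simpa using Finset.card_le_card hsub

end Counting

section Gabidulin

variable (K L : Type*) [Field K] [Fintype K] [Field L] [Algebra K L]

/-- The `K`-linear maps `x ↦ a₀ x + a₁ x ^ q + ⋯ + aₜ₋₁ x ^ q ^ (t - 1)` on `L`, where `q = #K`;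
a Gabidulin code consists of the restrictions of these maps to a `K`-subspace of `L`. -/
noncomputable def gabidulin (t : ℕ) : Submodule L (L →ₗ[K] L) :=
  Submodule.span L
    (Set.range fun i : Fin t ↦ (FiniteField.frobeniusAlgHom K L ^ i.1).toLinearMap)

variable {K L}

theorem gabidulin_mono : Monotone (gabidulin K L) := fun _ _ hst ↦
  Submodule.span_mono (Set.range_subset_iff.2 fun i ↦ ⟨Fin.castLE hst i, rfl⟩)

theorem finrank_gabidulin [FiniteDimensional K L] {t : ℕ} (ht : t ≤ finrank K L) :
    finrank L (gabidulin K L t) = t := by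
  have : Finite L := Module.finite_of_finite K
  have hinj : Function.Injective fun i : Fin t ↦ FiniteField.frobeniusAlgHom K L ^ i.1 :=
    (FiniteField.bijective_frobeniusAlgHom_pow K L).1.comp (Fin.castLE_injective ht)
  exact (finrank_span_eq_card ((linearIndependent_toLinearMap K L L).comp _ hinj)).trans
    (Fintype.card_fin t)

theorem finrank_restrictScalars_gabidulin [FiniteDimensional K L] {t : ℕ} (ht : t ≤ finrank K L) :
    finrank K ((gabidulin K L t).restrictScalars K) = finrank K L * t := by
  have : Module.Free L (gabidulin K L t) := Module.Free.of_divisionRing L (gabidulin K L t)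
  exact (Module.finrank_mul_finrank K L (gabidulin K L t)).symm.trans (by rw [finrank_gabidulin ht])

theorem exists_polynomial_of_mem_gabidulin {t : ℕ} {f : L →ₗ[K] L} (hf : f ∈ gabidulin K L t) :
    ∃ p : Polynomial L, p.degree < (Fintype.card K ^ t : ℕ) ∧ ∀ x, p.eval x = f x := by
  induction hf using Submodule.span_induction with
  | mem f hf =>
    obtain ⟨i, rfl⟩ := hf
    refine ⟨Polynomial.X ^ Fintype.card K ^ i.1, ?_, fun x ↦ ?_⟩
    · rw [Polynomial.degree_X_pow]
      exact_mod_cast Nat.pow_lt_pow_right Fintype.one_lt_card i.2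
    · simp [AlgHom.coe_pow, FiniteField.coe_frobeniusAlgHom, pow_iterate]
  | zero => exact ⟨0, by rw [Polynomial.degree_zero]; exact WithBot.bot_lt_coe _, by simp⟩
  | add f g _ _ hf hg =>
    obtain ⟨p, hp, hpf⟩ := hf
    obtain ⟨p', hp', hpg⟩ := hg
    exact ⟨p + p', (Polynomial.degree_add_le _ _).trans_lt (max_lt hp hp'), by simp [hpf, hpg]⟩
  | smul a f _ hf =>
    obtain ⟨p, hp, hpf⟩ := hf
    exact ⟨a • p, (Polynomial.degree_smul_le _ _).trans_lt hp, by simp [hpf]⟩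

theorem finrank_ker_lt_of_mem_gabidulin [FiniteDimensional K L] {t : ℕ} {f : L →ₗ[K] L}
    (hf : f ∈ gabidulin K L t) (hf0 : f ≠ 0) : finrank K f.ker < t := by
  classical
  obtain ⟨p, hp, hpf⟩ := exists_polynomial_of_mem_gabidulin hf
  have hp0 : p ≠ 0 := by
    rintro rfl
    exact hf0 (LinearMap.ext fun x ↦ by simp [← hpf])
  have hroots : (f.ker : Set L) ⊆ p.roots.toFinset := fun x hx ↦ by
    simpa [hp0, hpf] using hx
  have hcard := calc
    Fintype.card K ^ finrank K f.ker = (f.ker : Set L).ncard := by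
      rw [← Nat.card_coe_set_eq, ← Nat.card_eq_fintype_card]
      exact Module.natCard_eq_pow_finrank.symm
    _ ≤ p.roots.toFinset.card := by
      simpa using Set.ncard_le_ncard hroots (Finset.finite_toSet _)
    _ ≤ p.natDegree := (Multiset.toFinset_card_le _).trans p.card_roots'
    _ < Fintype.card K ^ t := (Polynomial.natDegree_lt_iff_degree_lt hp0).2 hp
  exact (Nat.pow_lt_pow_iff_right Fintype.one_lt_card).1 hcard

end Gabidulin

theorem exists_field_extension_finrank_eq (K : Type*) [Field K] [Finite K] {m : ℕ} (hm : 0 < m) :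
    ∃ (L : Type) (_ : Field L) (_ : Algebra K L), FiniteDimensional K L ∧ finrank K L = m := by
  obtain ⟨p, hp⟩ := CharP.exists K
  have : Fact p.Prime := ⟨CharP.char_is_prime K p⟩
  have : NeZero m := ⟨hm.ne'⟩
  exact ⟨FiniteField.Extension K p m, inferInstance, inferInstance, inferInstance,
    FiniteField.finrank_extension K p m⟩

theorem finrank_le_finrank_range_comp_add_finrank_ker {K U V W : Type*} [Field K]
    [AddCommGroup U] [Module K U] [AddCommGroup V] [Module K V] [AddCommGroup W] [Module K W]
    [FiniteDimensional K U] [FiniteDimensional K V] {β : U →ₗ[K] V} (hβ : Function.Injective β)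
    (f : V →ₗ[K] W) : finrank K U ≤ finrank K (f ∘ₗ β).range + finrank K f.ker := by
  have hker : finrank K (f ∘ₗ β).ker ≤ finrank K f.ker := by
    rw [LinearMap.ker_comp, (Submodule.equivMapOfInjective β hβ _).finrank_eq]
    exact Submodule.finrank_mono (Submodule.map_comap_le _ _)
  have hsum := (f ∘ₗ β).finrank_range_add_finrank_ker
  omega

theorem finrank_map_eq_of_disjoint_ker {K V W : Type*} [Field K] [AddCommGroup V] [Module K V]
    [AddCommGroup W] [Module K W] {f : V →ₗ[K] W} {p : Submodule K V} (h : Disjoint p f.ker) :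
    finrank K (p.map f) = finrank K p := by
  rw [← LinearMap.range_domRestrict]
  exact LinearMap.finrank_range_of_inj (LinearMap.injective_domRestrict_iff.2 h)

theorem exists_antitone_lt_rank (K : Type*) [Field K] [Finite K] {m n : ℕ} (hm : 0 < m)
    (hnm : n ≤ m) :
    ∃ M : ℕ → Submodule K (Matrix (Fin m) (Fin n) K), Antitone M ∧
      ∀ u, finrank K (M u) = m * (n - u) ∧ ∀ A ∈ M u, A ≠ 0 → u < A.rank := by
  have := Fintype.ofFinite K
  obtain ⟨L, _, _, _, hL⟩ := exists_field_extension_finrank_eq K hm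
  obtain ⟨β, hβ⟩ : ∃ β : (Fin n → K) →ₗ[K] L, Function.Injective β :=
    finrank_le_iff_exists_linearMap.1 (by simpa [hL] using hnm)
  let c : L ≃ₗ[K] (Fin m → K) := LinearEquiv.ofFinrankEq _ _ (by simp [hL])
  let Φ : (L →ₗ[K] L) →ₗ[K] Matrix (Fin m) (Fin n) K :=
    LinearMap.toMatrix'.toLinearMap ∘ₗ LinearMap.compRight K c.toLinearMap ∘ₗ LinearMap.lcomp K L β
  have hΦ (f : L →ₗ[K] L) : (Φ f).rank = finrank K (f ∘ₗ β).range := by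
    rw [← LinearEquiv.finrank_map_eq c, ← LinearMap.range_comp]
    exact congrArg (fun g : (Fin n → K) →ₗ[K] (Fin m → K) ↦ finrank K g.range)
      (Matrix.toLin'_toMatrix' (c.toLinearMap ∘ₗ f ∘ₗ β))
  have hlt {u : ℕ} {f : L →ₗ[K] L} (hf : f ∈ gabidulin K L (n - u)) (hf0 : f ≠ 0) :
      u < (Φ f).rank := by
    have hker := finrank_ker_lt_of_mem_gabidulin hf hf0
    have hle := finrank_le_finrank_range_comp_add_finrank_ker hβ f
    rw [finrank_fin_fun, ← hΦ] at hle
    omega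
  have hdisj (u : ℕ) : Disjoint ((gabidulin K L (n - u)).restrictScalars K) Φ.ker := by
    refine Submodule.disjoint_def.2 fun f hf hΦf ↦ by_contra fun hf0 ↦ ?_
    have hpos := hlt hf hf0
    rw [LinearMap.mem_ker.1 hΦf, Matrix.rank_zero] at hpos
    omega
  refine ⟨fun u ↦ ((gabidulin K L (n - u)).restrictScalars K).map Φ, fun u v huv ↦
    Submodule.map_mono (gabidulin_mono (by omega)), fun u ↦ ⟨?_, ?_⟩⟩
  · exact (finrank_map_eq_of_disjoint_ker (hdisj u)).trans
      (hL ▸ finrank_restrictScalars_gabidulin (by omega))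
  · rintro _ ⟨f, hf, rfl⟩ hf0
    exact hlt hf fun h ↦ hf0 (by rw [h, map_zero])

section Construction

theorem exists_antitone_finrank_eq (K : Type*) [Field K] (n : ℕ) :
    ∃ S : ℕ → Submodule K (Fin n → K), Antitone S ∧ ∀ w, finrank K (S w) = n - w := by
  let res (w : ℕ) := LinearMap.funLeft K K (Subtype.val : {j : Fin n // j.1 < w} → Fin n)
  refine ⟨fun w ↦ (res w).ker, fun v w hvw x hx ↦ ?_, fun w ↦ ?_⟩
  · exact funext fun j ↦ congrFun hx ⟨j.1, j.2.trans_le hvw⟩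
  · have hsum := (res w).finrank_range_add_finrank_ker
    rw [LinearMap.range_eq_top.2 (LinearMap.funLeft_surjective_of_injective K K _
      Subtype.val_injective), finrank_top, finrank_fintype_fun_eq_card, finrank_fin_fun,
      Fintype.card_subtype, Fin.card_filter_val_lt] at hsum
    change finrank K (res w).ker = n - w
    omega

theorem exists_monotone_rank_le (K : Type*) [Field K] (m n : ℕ) :
    ∃ A : ℕ → Submodule K (Matrix (Fin m) (Fin n) K), Monotone A ∧
      ∀ w, (w ≤ n → finrank K (A w) = m * w) ∧ ∀ X ∈ A w, X.rank ≤ w := by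
  obtain ⟨S, hS, hdim⟩ := exists_antitone_finrank_eq K n
  refine ⟨fun w ↦ (homsVanishingOn (S w)).map Matrix.toLin'.symm.toLinearMap, fun v w hvw ↦
    Submodule.map_mono fun f hf ↦ mem_homsVanishingOn.2
      ((hS hvw).trans (mem_homsVanishingOn.1 hf)), fun w ↦ ⟨fun hw ↦ ?_, ?_⟩⟩
  · rw [LinearEquiv.finrank_map_eq, finrank_homsVanishingOn (w := w)
      (by rw [hdim, finrank_fin_fun]; omega), finrank_fin_fun, mul_comm]
  · rintro _ ⟨f, hf, rfl⟩
    have hker := Submodule.finrank_mono (mem_homsVanishingOn.1 hf)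
    have hsum := f.finrank_range_add_finrank_ker
    rw [finrank_fin_fun] at hsum
    have hrank : (Matrix.toLin'.symm f).rank = finrank K f.range :=
      congrArg (fun g : (Fin n → K) →ₗ[K] (Fin m → K) ↦ finrank K g.range)
        (Matrix.toLin'_toMatrix' f)
    rw [hdim] at hker
    change (Matrix.toLin'.symm f).rank ≤ w
    omega

variable {K : Type*} [Field K]

theorem finrank_sup_eq_of_disjoint {V : Type*} [AddCommGroup V] [Module K V]
    [FiniteDimensional K V] {S T : Submodule K V} (h : Disjoint S T) :
    finrank K ↥(S ⊔ T) = finrank K S + finrank K T := by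
  rw [← Submodule.finrank_sup_add_finrank_inf_eq, disjoint_iff.1 h, finrank_bot, add_zero]

theorem exists_submodule_of_chains {V : Type*} [AddCommGroup V] [Module K V]
    [FiniteDimensional K V] {A M : ℕ → Submodule K V} (hA : Monotone A) (hM : Antitone M)
    (hAM : ∀ u, Disjoint (A u) (M u)) {N : ℕ → ℕ} (hN : Monotone N) (hN0 : N 0 = 0) {n : ℕ}
    (hstep : ∀ u < n, N (u + 1) ≤ N u + finrank K ↥(A (u + 1) ⊓ M u)) :
    ∃ E ≤ A n, finrank K E = N n ∧
      ∀ u ≤ n, N u ≤ finrank K ↥(E ⊓ A u) ∧ N n ≤ N u + finrank K ↥(E ⊓ M u) := by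
  induction n with
  | zero => exact ⟨⊥, bot_le, by rw [finrank_bot, hN0], fun u hu ↦ by simp [Nat.le_zero.1 hu, hN0]⟩
  | succ n ih =>
    obtain ⟨E, hEA, hEdim, hE⟩ := ih fun u hu ↦ hstep u (by omega)
    have hNn : N n ≤ N (n + 1) := hN n.le_succ
    obtain ⟨C, -, hC, hCdim⟩ := exists_between_finrank_eq
      (bot_le : ⊥ ≤ A (n + 1) ⊓ M n) (w := N (n + 1) - N n) (by simp)
      (by have := hstep n n.lt_succ_self; omega)
    have hEC : Disjoint E C := (hAM n).mono hEA (hC.trans inf_le_right)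
    have hdim : finrank K ↥(E ⊔ C) = N (n + 1) := by
      rw [finrank_sup_eq_of_disjoint hEC]
      omega
    have hle : E ⊔ C ≤ A (n + 1) := sup_le (hEA.trans (hA n.le_succ)) (hC.trans inf_le_left)
    refine ⟨E ⊔ C, hle, hdim, fun u hu ↦ ?_⟩
    obtain rfl | hu := hu.eq_or_lt
    · rw [inf_eq_left.2 hle, hdim]
      exact ⟨le_rfl, Nat.le_add_right _ _⟩
    · replace hu := Nat.le_of_lt_succ hu
      have hsup : E ⊓ M u ⊔ C ≤ (E ⊔ C) ⊓ M u :=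
        sup_le (inf_le_inf_right _ le_sup_left)
          (le_inf le_sup_right (hC.trans (inf_le_right.trans (hM hu))))
      have hfin := Submodule.finrank_mono hsup
      rw [finrank_sup_eq_of_disjoint (hEC.mono_left inf_le_left)] at hfin
      have hEu := (hE u hu).2
      exact ⟨(hE u hu).1.trans (Submodule.finrank_mono (inf_le_inf_right _ le_sup_left)), by omega⟩

variable {m n : ℕ}

theorem disjoint_of_rank_le_of_lt_rank {D M : Submodule K (Matrix (Fin m) (Fin n) K)} {u : ℕ}
    (hD : ∀ X ∈ D, X.rank ≤ u) (hM : ∀ X ∈ M, X ≠ 0 → u < X.rank) : Disjoint D M :=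
  Submodule.disjoint_def.2 fun X hXD hXM ↦ by_contra fun hX ↦ (hD X hXD).not_gt (hM X hXM hX)

theorem grw_le_iff_le {E A M : Submodule K (Matrix (Fin m) (Fin n) K)} {r u N : ℕ} (hnm : n ≤ m)
    (hr : r ≤ finrank K E) (hA : IsOptAnticode A) (hAu : maxrank A ≤ u)
    (hM : ∀ X ∈ M, X ≠ 0 → u < X.rank) (hEA : N ≤ finrank K ↥(E ⊓ A))
    (hEM : finrank K E ≤ N + finrank K ↥(E ⊓ M)) : grw E r ≤ u ↔ r ≤ N := by
  rw [grw_le_iff hnm hr]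
  refine ⟨fun ⟨𝒜, _, hu, hr𝒜⟩ ↦ ?_, fun hrN ↦ ⟨A, hA, hAu, hrN.trans hEA⟩⟩
  have hdisj : Disjoint (E ⊓ 𝒜) (E ⊓ M) := (disjoint_of_rank_le_of_lt_rank
    (fun X hX ↦ maxrank_le_iff.1 hu X (Submodule.mem_inf.1 hX).2) hM).mono_right inf_le_right
  have hle := Submodule.finrank_mono (sup_le inf_le_left inf_le_left : E ⊓ 𝒜 ⊔ E ⊓ M ≤ E)
  rw [finrank_sup_eq_of_disjoint hdisj] at hle
  omega

theorem exists_grw_le_iff [Finite K] (hm : 0 < m) (hnm : n ≤ m) {N : ℕ → ℕ}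
    (hN : Monotone N) (hN0 : N 0 = 0) (hstep : ∀ u < n, N (u + 1) ≤ N u + m) :
    ∃ E : Submodule K (Matrix (Fin m) (Fin n) K), finrank K E = N n ∧
      ∀ r ≤ N n, ∀ u, grw E r ≤ u ↔ r ≤ N u := by
  obtain ⟨A, hA, hArank⟩ := exists_monotone_rank_le K m n
  obtain ⟨M, hM, hMrank⟩ := exists_antitone_lt_rank K hm hnm
  have hinf (u : ℕ) (hu : u < n) : m ≤ finrank K ↥(A (u + 1) ⊓ M u) := by
    have hsum := Submodule.finrank_sup_add_finrank_inf_eq (A (u + 1)) (M u)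
    have hle := (A (u + 1) ⊔ M u).finrank_le
    rw [(hArank (u + 1)).1 hu, (hMrank u).1] at hsum
    rw [finrank_matrix, finrank_self, Fintype.card_fin, Fintype.card_fin, mul_one] at hle
    have hmul : m * (u + 1) + m * (n - u) = m * n + m := by
      rw [mul_add_one, add_right_comm, ← mul_add, Nat.add_sub_cancel' hu.le]
    omega
  obtain ⟨E, -, hEdim, hE⟩ := exists_submodule_of_chains hA hM
    (fun u ↦ disjoint_of_rank_le_of_lt_rank (hArank u).2 (hMrank u).2) hN hN0
    fun u hu ↦ (hstep u hu).trans (Nat.add_le_add_left (hinf u hu) _)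
  refine ⟨E, hEdim, fun r hr u ↦ ?_⟩
  have hrE := hr.trans_eq hEdim.symm
  obtain hu | hu := le_or_gt n u
  · exact iff_of_true ((grw_le_width hnm hrE).trans hu) (hr.trans (hN hu))
  · exact grw_le_iff_le hnm hrE (isOptAnticode_of_finrank_eq hnm ((hArank u).1 hu.le) (hArank u).2)
      (maxrank_le_iff.2 (hArank u).2) (hMrank u).2 (hE u hu.le).1 (hEdim ▸ (hE u hu.le).2)

theorem exists_grw_eq [Finite K] {k : ℕ} {d : Fin k → ℕ} (hm : 0 < m) (hnm : n ≤ m)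
    (hd : Monotone d) (hpos : ∀ r, 1 ≤ d r) (hn : ∀ r, d r ≤ n)
    (hmul : ∀ v, (Finset.univ.filter (fun r ↦ d r = v)).card ≤ m) :
    ∃ 𝒞 : Submodule K (Matrix (Fin m) (Fin n) K),
      finrank K 𝒞 = k ∧ ∀ r : Fin k, grw 𝒞 (r.1 + 1) = d r := by
  let N (u : ℕ) := (Finset.univ.filter (fun r ↦ d r ≤ u)).card
  have hN : Monotone N := fun u v huv ↦
    Finset.card_le_card (Finset.monotone_filter_right _ fun r _ hr ↦ hr.trans huv)
  have hN0 : N 0 = 0 := Finset.card_eq_zero.2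
    (Finset.filter_false_of_mem fun r _ ↦ by have := hpos r; omega)
  have hstep (u : ℕ) : N (u + 1) ≤ N u + m := by
    refine le_trans ?_ (Nat.add_le_add_left (hmul (u + 1)) _)
    refine (Finset.card_le_card fun r hr ↦ ?_).trans (Finset.card_union_le _ _)
    simp only [Finset.mem_union, Finset.mem_filter, Finset.mem_univ, true_and] at hr ⊢
    omega
  have hNn : N n = k := by simp [N, hn]
  obtain ⟨𝒞, hdim, hgrw⟩ := exists_grw_le_iff (K := K) hm hnm hN hN0 fun u _ ↦ hstep u
  refine ⟨𝒞, hdim.trans hNn, fun r ↦ eq_of_forall_ge_iff fun u ↦ ?_⟩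
  rw [hgrw _ (by omega), Nat.add_one_le_iff]
  exact val_lt_card_filter_le_iff hd

end Construction

/-- For `1 ≤ n ≤ m`, a non-decreasing sequence of positive integers `d_1 ≤ ⋯ ≤ d_k` is the
sequence of generalized rank weights of a linear subcode of `F_q^{m×n}` if and only if
`k ≤ mn`, `d_k ≤ n`, and every value occurs at most `m` times among `d_1, …, d_k`. -/
theorem rank_metric_grw_characterization {m n : ℕ} (hn : 1 ≤ n) (hnm : n ≤ m)
    {k : ℕ} (d : Fin k → ℕ) (hmono : Monotone d) (hpos : ∀ r, 1 ≤ d r) :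
    (∃ 𝒞 : Submodule F (Matrix (Fin m) (Fin n) F),
      Module.finrank F 𝒞 = k ∧ ∀ r : Fin k, grw 𝒞 (r.1 + 1) = d r) ↔
    (k ≤ m * n ∧ (∀ r, d r ≤ n) ∧
      ∀ v : ℕ, (Finset.univ.filter (fun r : Fin k => d r = v)).card ≤ m) := by
  constructor
  · rintro ⟨𝒞, rfl, hgrw⟩
    refine ⟨by simpa [finrank_matrix] using 𝒞.finrank_le,
      fun r ↦ hgrw r ▸ grw_le_width hnm r.2, card_filter_eq_le hmono fun s t hst ↦ ?_⟩
    rw [← hgrw, ← hgrw, ← hst, add_right_comm]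
    exact grw_lt_grw_add hnm s.1.succ_pos (by omega)
  · rintro ⟨-, hdn, hmul⟩
    exact exists_grw_eq (hn.trans hnm) hnm hmono hpos hdn hmul
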